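/- Let d ≥ 1 and let X ⊆ ℝ^d be a convex set. Let n ≥ 1 and let 𝒳ₙ be a finite subset of X that is quasi-uniformly distributed in X with constants c, C (so 0 < c ≤ 2C). Let κ > 0, α > (d+2)/2, and let K ∈ 𝕂_{κ,α} with m₁ := min_{|x|≤1} K(x) > 0. Set βₙ := C^{−1} n^{1/d} and S_{K,n}(x) := Σ_{y∈𝒳ₙ} K(βₙ(x−y)). Then for every bounded continuous function f : X → ℝ and every x ∈ X, |f(x) − S_{K,n}(x)^{−1} Σ_{y∈𝒳ₙ} f(y) K(βₙ(x−y))| ≤ κ · m₁^{−1} · (C+1) · K_d · (1 + Σ_{j=1}^∞ [(j+1)^{d+1} − (j+1)j^d] · j^{−2α}) · ω(f, n^{−1/d}), where K_d := 2^{(3d+3)/2} (C/c)^d and the series converges since 2α > d+2. -/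

import Mathlib

open Metric

/-- The modulus of continuity of `f` on the set `X`. -/
noncomputable def omegaMod {d : ℕ} (X : Set (EuclideanSpace ℝ (Fin d)))
    (f : EuclideanSpace ℝ (Fin d) → ℝ) (t : ℝ) : ℝ :=
  sSup {v : ℝ | ∃ x ∈ X, ∃ y ∈ X, ‖x - y‖ ≤ t ∧ v = |f x - f y|}

/-- Volume bound for the cardinality of a separated set in a ball. -/
lemma card_le_of_separated {d : ℕ} (S : Finset (EuclideanSpace ℝ (Fin d)))
    (x : EuclideanSpace ℝ (Fin d)) {s R : ℝ} (hs : 0 < s) (hR : 0 ≤ R)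
    (hsep : ∀ y ∈ S, ∀ z ∈ S, y ≠ z → s ≤ ‖y - z‖) (hball : ∀ y ∈ S, ‖x - y‖ ≤ R) :
    (S.card : ℝ) ≤ (2 * R / s + 1) ^ d := by
  open MeasureTheory in
  let μ : Measure (EuclideanSpace ℝ (Fin d)) := Measure.addHaar
  have hdisj : (S : Set (EuclideanSpace ℝ (Fin d))).PairwiseDisjoint fun y => ball y (s / 2) := by
    intro y hy z hz hyz
    refine ball_disjoint_ball ?_
    rw [dist_eq_norm]
    linarith [hsep y hy z hz hyz]
  have hsub : (⋃ y ∈ S, ball y (s / 2)) ⊆ ball x (R + s / 2) := by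
    refine Set.iUnion₂_subset fun y hy => ball_subset_ball' ?_
    rw [dist_comm, dist_eq_norm]
    linarith [hball y hy]
  have hvol : (S.card : ENNReal) * ENNReal.ofReal ((s / 2) ^ d) * μ (ball 0 1)
      ≤ ENNReal.ofReal ((R + s / 2) ^ d) * μ (ball 0 1) := by
    have h := μ.mono hsub
    have hfin : Module.finrank ℝ (EuclideanSpace ℝ (Fin d)) = d := by simp
    change μ _ ≤ μ _ at h
    rw [MeasureTheory.measure_biUnion_finset hdisj fun _ _ => measurableSet_ball] at h
    rw [μ.addHaar_ball_of_pos x (by positivity : 0 < R + s / 2), hfin,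
      Finset.sum_congr rfl fun y _ => μ.addHaar_ball_of_pos y (half_pos hs), Finset.sum_const,
      nsmul_eq_mul, hfin] at h
    rwa [mul_assoc]
  have hcard : (S.card : ENNReal) * ENNReal.ofReal ((s / 2) ^ d)
      ≤ ENNReal.ofReal ((R + s / 2) ^ d) :=
    (ENNReal.mul_le_mul_iff_left (measure_ball_pos _ _ zero_lt_one).ne'
      measure_ball_lt_top.ne).1 hvol
  have hreal : (S.card : ℝ) * (s / 2) ^ d ≤ (R + s / 2) ^ d := by
    rw [← ENNReal.ofReal_natCast, ← ENNReal.ofReal_mul (by positivity)] at hcard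
    exact (ENNReal.ofReal_le_ofReal_iff (by positivity)).1 hcard
  have hsplit : R + s / 2 = (2 * R / s + 1) * (s / 2) := by field_simp
  rw [hsplit, mul_pow] at hreal
  exact le_of_mul_le_mul_right hreal (by positivity)

lemma abs_sub_le_omegaMod {d : ℕ} {X : Set (EuclideanSpace ℝ (Fin d))}
    {f : EuclideanSpace ℝ (Fin d) → ℝ} (hfb : ∃ M : ℝ, ∀ x ∈ X, |f x| ≤ M) {t : ℝ}
    {x y : EuclideanSpace ℝ (Fin d)} (hx : x ∈ X) (hy : y ∈ X) (hxy : ‖x - y‖ ≤ t) :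
    |f x - f y| ≤ omegaMod X f t := by
  obtain ⟨M, hM⟩ := hfb
  refine le_csSup ⟨M + M, ?_⟩ ⟨x, hx, y, hy, hxy, rfl⟩
  rintro v ⟨a, ha, b, hb, -, rfl⟩
  exact (abs_sub _ _).trans (add_le_add (hM a ha) (hM b hb))

/-- On a convex set, the oscillation of `f` at distance `‖x - y‖` is controlled linearly by the
modulus of continuity at scale `t`. -/
lemma abs_sub_le_mul_omegaMod {d : ℕ} {X : Set (EuclideanSpace ℝ (Fin d))} (hX : Convex ℝ X)
    {f : EuclideanSpace ℝ (Fin d) → ℝ} (hfb : ∃ M : ℝ, ∀ x ∈ X, |f x| ≤ M) {t : ℝ} (ht : 0 < t)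
    {x y : EuclideanSpace ℝ (Fin d)} (hx : x ∈ X) (hy : y ∈ X) :
    |f x - f y| ≤ (1 + ‖x - y‖ / t) * omegaMod X f t := by
  have hω : 0 ≤ omegaMod X f t :=
    (abs_nonneg _).trans (abs_sub_le_omegaMod hfb hx hx (by simpa using ht.le))
  set m : ℕ := ⌊‖x - y‖ / t⌋₊ + 1 with hm
  have hm0 : (0 : ℝ) < m := by positivity
  have hmle : (m : ℝ) ≤ 1 + ‖x - y‖ / t := by
    rw [hm]; push_cast
    linarith [Nat.floor_le (show 0 ≤ ‖x - y‖ / t by positivity)]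
  have hlt : ‖x - y‖ / m ≤ t := by
    have := Nat.lt_floor_add_one (‖x - y‖ / t)
    rw [div_lt_iff₀ ht] at this
    rw [div_le_iff₀ hm0, hm]; push_cast
    linarith
  let p : ℕ → EuclideanSpace ℝ (Fin d) := fun i => x + ((i : ℝ) / m) • (y - x)
  have hp : ∀ i ≤ m, p i ∈ X := fun i hi => hX.add_smul_sub_mem hx hy
    ⟨by positivity, div_le_one_of_le₀ (by exact_mod_cast hi) hm0.le⟩
  have hstep : ∀ {i : ℕ}, i < m → dist (f (p i)) (f (p (i + 1))) ≤ omegaMod X f t := by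
    intro i hi
    rw [Real.dist_eq]
    refine abs_sub_le_omegaMod hfb (hp i hi.le) (hp _ hi) ?_
    have : p i - p (i + 1) = (m : ℝ)⁻¹ • (x - y) := by
      simp only [p]; push_cast
      rw [add_sub_add_left_eq_sub, ← sub_smul, ← neg_sub x y, smul_neg, ← neg_smul]
      congr 1; field_simp; ring
    rw [this, norm_smul, norm_inv, Real.norm_natCast, inv_mul_eq_div]
    exact hlt
  have hsum := dist_le_range_sum_of_dist_le (f := fun i => f (p i)) m hstep
  have h0 : p 0 = x := by simp [p]
  have h1 : p m = y := by simp [p, hm0.ne']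
  rw [h0, h1, Real.dist_eq, Finset.sum_const, Finset.card_range, nsmul_eq_mul] at hsum
  exact hsum.trans (mul_le_mul_of_nonneg_right hmle hω)

/-- Abel summation: an antitone weight summed against the increments of a sequence that is
nonnegative after its first term. -/
lemma mul_sub_mul_le_sum_mul_sub {w D : ℕ → ℝ} (hw : Antitone w) (hD : ∀ j, 0 ≤ D (j + 1)) (J : ℕ) :
    w J * D J - w 0 * D 0 ≤ ∑ j ∈ Finset.range J, w j * (D (j + 1) - D j) := by
  induction J with
  | zero => simp
  | succ J ih =>
    rw [Finset.sum_range_succ]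
    have := mul_le_mul_of_nonneg_right (hw J.le_succ) (hD J)
    simp only [Nat.succ_eq_add_one] at this
    linarith

/-- The terms of the series in the Jackson-type constant. -/
noncomputable def shellTerm (d : ℕ) (α : ℝ) (j : ℕ) : ℝ :=
  (((j : ℝ) + 2) ^ (d + 1) - ((j : ℝ) + 2) * ((j : ℝ) + 1) ^ d) * ((j : ℝ) + 1) ^ (-(2 * α))

lemma shellTerm_eq (d : ℕ) (α : ℝ) (j : ℕ) :
    shellTerm d α j = ((j : ℝ) + 2) * ((j : ℝ) + 1) ^ (-(2 * α)) *
      (((j : ℝ) + 2) ^ d - ((j : ℝ) + 1) ^ d) := by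
  rw [shellTerm]; ring

lemma shellTerm_nonneg (d : ℕ) (α : ℝ) (j : ℕ) : 0 ≤ shellTerm d α j := by
  rw [shellTerm_eq]
  have : ((j : ℝ) + 1) ^ d ≤ ((j : ℝ) + 2) ^ d := by gcongr; norm_num
  exact mul_nonneg (by positivity) (sub_nonneg.2 this)

lemma summable_shellTerm {d : ℕ} {α : ℝ} (hα : ((d : ℝ) + 2) / 2 < α) :
    Summable (shellTerm d α) := by
  have hs : Summable fun j : ℕ => ((d : ℝ) * 2 ^ d) * (((j + 1 : ℕ) : ℝ) ^ ((d : ℝ) - 2 * α)) :=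
    ((summable_nat_add_iff 1).2 (Real.summable_nat_rpow.2 (by linarith))).mul_left _
  refine Summable.of_nonneg_of_le (shellTerm_nonneg d α) (fun j => ?_) hs
  have hj : (0 : ℝ) < (j : ℝ) + 1 := by positivity
  have hdiff : ((j : ℝ) + 2) * (((j : ℝ) + 2) ^ d - ((j : ℝ) + 1) ^ d)
      ≤ d * 2 ^ d * ((j : ℝ) + 1) ^ d := by
    have hB : 1 + (d : ℝ) * (-1 / ((j : ℝ) + 2)) ≤ (1 + -1 / ((j : ℝ) + 2)) ^ d := by
      refine one_add_mul_le_pow ?_ d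
      rw [le_div_iff₀ (by positivity)]
      linarith
    have hq : 1 + -1 / ((j : ℝ) + 2) = ((j : ℝ) + 1) / ((j : ℝ) + 2) := by field_simp; ring
    rw [hq, div_pow, le_div_iff₀ (by positivity)] at hB
    have h2 : ((j : ℝ) + 2) ^ d ≤ 2 ^ d * ((j : ℝ) + 1) ^ d := by
      rw [← mul_pow]; gcongr; linarith
    have h3 : ((j : ℝ) + 2) * ((1 + (d : ℝ) * (-1 / ((j : ℝ) + 2))) * ((j : ℝ) + 2) ^ d)
        = ((j : ℝ) + 2) * ((j : ℝ) + 2) ^ d - d * ((j : ℝ) + 2) ^ d := by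
      field_simp; ring
    have h4 := mul_le_mul_of_nonneg_left hB (show (0 : ℝ) ≤ (j : ℝ) + 2 by positivity)
    have h5 := mul_le_mul_of_nonneg_left h2 (Nat.cast_nonneg (α := ℝ) d)
    rw [h3] at h4
    linarith
  calc shellTerm d α j = ((j : ℝ) + 2) * (((j : ℝ) + 2) ^ d - ((j : ℝ) + 1) ^ d)
        * ((j : ℝ) + 1) ^ (-(2 * α)) := by rw [shellTerm_eq]; ring
    _ ≤ d * 2 ^ d * ((j : ℝ) + 1) ^ d * ((j : ℝ) + 1) ^ (-(2 * α)) := by gcongr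
    _ = _ := by
      push_cast
      rw [sub_eq_add_neg, Real.rpow_add hj, Real.rpow_natCast, mul_assoc]

lemma antitone_shell_weight {α : ℝ} (hα : 1 ≤ 2 * α) :
    Antitone fun j : ℕ => ((j : ℝ) + 3) * ((j : ℝ) + 2) ^ (-(2 * α)) := by
  refine antitone_nat_of_succ_le fun j => ?_
  have key : ∀ t : ℝ, 0 < t → (t + 1) * t ^ (-(2 * α)) = (1 + t⁻¹) * t ^ (-(2 * α - 1)) := by
    intro t ht
    rw [show -(2 * α) = -1 + -(2 * α - 1) by ring, Real.rpow_add ht, Real.rpow_neg_one]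
    field_simp
  have h0 := key ((j : ℝ) + 2) (by positivity)
  have h1 := key ((j : ℝ) + 3) (by positivity)
  have e0 : (j : ℝ) + 2 + 1 = j + 3 := by ring
  have e1 : (j : ℝ) + 1 + 3 = j + 3 + 1 := by ring
  have e2 : (j : ℝ) + 1 + 2 = j + 3 := by ring
  push_cast
  rw [e1, e2, h1, ← e0, h0]
  have hr : ((j : ℝ) + 2 + 1) ^ (-(2 * α - 1)) ≤ ((j : ℝ) + 2) ^ (-(2 * α - 1)) :=
    Real.rpow_le_rpow_of_nonpos (by positivity) (by linarith) (by linarith)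
  rw [e0] at hr ⊢
  gcongr
  norm_num

/-- The decay of the kernel on the shells `j ≤ r < j + 1`. -/
noncomputable def shellWeight (d : ℕ) (α : ℝ) : ℕ → ℝ
  | 0 => 1
  | 1 => (√2)⁻¹ ^ d
  | j + 2 => ((j : ℝ) + 3) * ((j : ℝ) + 2) ^ (-(2 * α))

lemma kernel_le_shellWeight {d : ℕ} {α C r : ℝ} (hα : ((d : ℝ) + 2) / 2 < α) (hC : 0 < C)
    (hr : 0 ≤ r) :
    (1 + C * r) * (1 + r ^ 2) ^ (-α) ≤ (C + 1) * shellWeight d α ⌊r⌋₊ := by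
  have hα0 : 0 < α := lt_of_le_of_lt (by positivity) hα
  have hlo := Nat.floor_le hr
  have hhi := Nat.lt_floor_add_one r
  rcases hj : ⌊r⌋₊ with _ | _ | j <;> rw [hj] at hlo hhi <;> push_cast at hlo hhi <;>
    simp only [shellWeight]
  · have h1 : (1 + r ^ 2) ^ (-α) ≤ 1 :=
      Real.rpow_le_one_of_one_le_of_nonpos (by nlinarith) (by linarith)
    have h2 : 1 + C * r ≤ C + 1 := by nlinarith
    exact mul_le_mul h2 h1 (by positivity) (by positivity)
  · have h1 : (1 + r ^ 2) ^ (-α) ≤ (2 : ℝ) ^ (-(((d : ℝ) + 2) / 2)) :=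
      (Real.rpow_le_rpow_of_nonpos (by norm_num) (by nlinarith) (by linarith)).trans
        (Real.rpow_le_rpow_of_exponent_le (by norm_num) (by linarith))
    have h2 : 1 + C * r ≤ (C + 1) * 2 := by nlinarith
    have h3 : (2 : ℝ) * 2 ^ (-(((d : ℝ) + 2) / 2)) = (√2)⁻¹ ^ d := by
      rw [show -(((d : ℝ) + 2) / 2) = -1 + (-(1 / 2)) * (d : ℝ) by ring,
        Real.rpow_add (by norm_num), Real.rpow_mul (by norm_num), Real.rpow_natCast,
        Real.rpow_neg_one, Real.rpow_neg (by norm_num), Real.sqrt_eq_rpow]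
      ring
    rw [← h3, ← mul_assoc]
    exact mul_le_mul h2 h1 (by positivity) (by positivity)
  · have hlo' : (j : ℝ) + 2 ≤ r := by linarith
    have h1 : (1 + r ^ 2) ^ (-α) ≤ ((j : ℝ) + 2) ^ (-(2 * α)) := by
      rw [show -(2 * α) = ((2 : ℕ) : ℝ) * (-α) by push_cast; ring,
        Real.rpow_mul (by positivity), Real.rpow_natCast]
      refine Real.rpow_le_rpow_of_nonpos (by positivity) ?_ (by linarith)
      nlinarith
    have h2 : 1 + C * r ≤ (C + 1) * ((j : ℝ) + 3) := by nlinarith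
    rw [← mul_assoc]
    exact mul_le_mul h2 h1 (by positivity) (by positivity)

lemma sum_comp_eq_sum_range_mul_sub {ι : Type*} (S : Finset ι) (g : ι → ℕ) (w : ℕ → ℝ) {J : ℕ}
    (hJ : ∀ y ∈ S, g y < J) :
    ∑ y ∈ S, w (g y) = ∑ j ∈ Finset.range J,
      w j * (((S.filter fun y => g y < j + 1).card : ℝ) - (S.filter fun y => g y < j).card) := by
  rw [← Finset.sum_fiberwise_of_maps_to (t := Finset.range J) (g := g)
    (fun y hy => Finset.mem_range.2 (hJ y hy))]
  refine Finset.sum_congr rfl fun j _ => ?_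
  classical
  have hcard : (S.filter fun y => g y < j + 1).card
      = (S.filter fun y => g y < j).card + (S.filter fun y => g y = j).card := by
    rw [← Finset.card_union_of_disjoint]
    · congr 1; ext y; simp only [Finset.mem_filter, Finset.mem_union]; grind
    · rw [Finset.disjoint_filter]; intros; omega
  rw [hcard, Finset.sum_congr rfl fun y hy => by rw [(Finset.mem_filter.1 hy).2],
    Finset.sum_const, nsmul_eq_mul]
  push_cast; ring

/-- Summing the shell weights against a counting function of volume growth. -/
lemma sum_shellWeight_le {d : ℕ} {α q : ℝ} (hα : ((d : ℝ) + 2) / 2 < α) (hq : 1 ≤ 2 * q)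
    {F : ℕ → ℝ} (hF0 : ∀ j, 0 ≤ F j) (hF : ∀ j, F j ≤ (2 * j * q + 1) ^ d) (J : ℕ) :
    ∑ j ∈ Finset.range (J + 2), shellWeight d α j * (F (j + 1) - F j) ≤
      2 * √2 * ((2 * √2 * q) ^ d) * (1 + ∑' j, shellTerm d α j) := by
  have hs1 : (1.4 : ℝ) ≤ √2 := Real.le_sqrt_of_sq_le (by norm_num)
  have hs2 : √2 * √2 = 2 := Real.mul_self_sqrt (by norm_num)
  have hq0 : 0 < q := by linarith
  set μ : ℝ := (2 * √2 * q) ^ d with hμ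
  have hμ0 : 0 < μ := by positivity
  set v : ℕ → ℝ := fun j => ((j : ℝ) + 3) * ((j : ℝ) + 2) ^ (-(2 * α)) with hv
  have hv_anti : Antitone v :=
    antitone_shell_weight (by linarith [Nat.cast_nonneg (α := ℝ) d])
  have hv_nonneg : ∀ j, 0 ≤ v j := fun j => by simp only [hv]; positivity
  set D : ℕ → ℝ := fun j => μ * ((j : ℝ) + 2) ^ d - F (j + 2) with hD
  have hD_nonneg : ∀ j, 0 ≤ D (j + 1) := by
    intro j
    have h := hF (j + 1 + 2)
    have hle : (2 * ((j + 1 + 2 : ℕ) : ℝ) * q + 1) ^ d ≤ μ * (((j + 1 : ℕ) : ℝ) + 2) ^ d := by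
      rw [hμ, ← mul_pow]
      push_cast
      gcongr
      have hj : (0 : ℝ) ≤ j := Nat.cast_nonneg j
      nlinarith [mul_nonneg hq0.le hj,
        mul_le_mul_of_nonneg_left hs1 (show 0 ≤ q * ((j : ℝ) + 3) by positivity)]
    simp only [hD]
    linarith
  have habel := mul_sub_mul_le_sum_mul_sub hv_anti hD_nonneg J
  have hend : 0 ≤ v J * D J - v 0 * D 0 + v 0 * (μ * 2 ^ d) := by
    have h0 : v 0 * D 0 ≤ v 0 * (μ * 2 ^ d) := by
      refine mul_le_mul_of_nonneg_left ?_ (hv_nonneg 0)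
      simp only [hD]; norm_num; exact hF0 2
    cases J with
    | zero =>
      have : 0 ≤ v 0 * (μ * 2 ^ d) := mul_nonneg (hv_nonneg 0) (by positivity)
      linarith
    | succ J =>
      have := mul_nonneg (hv_nonneg (J + 1)) (hD_nonneg J)
      linarith
  have htail : ∑ j ∈ Finset.range J, v j * (D (j + 1) - D j) =
      μ * ∑ j ∈ Finset.range J, shellTerm d α (j + 1)
        - ∑ j ∈ Finset.range J, v j * (F (j + 2 + 1) - F (j + 2)) := by
    rw [Finset.mul_sum, ← Finset.sum_sub_distrib]
    refine Finset.sum_congr rfl fun j _ => ?_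
    have e1 : (j : ℝ) + 1 + 2 = j + 3 := by ring
    have e2 : (j : ℝ) + 1 + 1 = j + 2 := by ring
    have e3 : j + 1 + 2 = j + 2 + 1 := by ring
    simp only [hD, hv, shellTerm_eq, e3]
    push_cast
    rw [e1, e2]
    ring
  have hv0 : v 0 * (μ * 2 ^ d) ≤ 3 / 4 * μ := by
    have h : (2 : ℝ) ^ (-(2 * α)) ≤ ((2 : ℝ) ^ (d + 2))⁻¹ := by
      rw [← Real.rpow_natCast, ← Real.rpow_neg (by norm_num)]
      refine Real.rpow_le_rpow_of_exponent_le (by norm_num) ?_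
      push_cast; linarith
    have e : v 0 = 3 * (2 : ℝ) ^ (-(2 * α)) := by simp [hv]
    rw [e]
    calc 3 * (2 : ℝ) ^ (-(2 * α)) * (μ * 2 ^ d)
        ≤ 3 * ((2 : ℝ) ^ (d + 2))⁻¹ * (μ * 2 ^ d) := by gcongr
      _ = 3 / 4 * μ := by rw [pow_add]; field_simp; norm_num
  have hF1 : F 1 ≤ μ * 2 ^ d := by
    refine (hF 1).trans ?_
    rw [hμ, ← mul_pow]
    push_cast
    gcongr
    nlinarith
  have hF2 : (√2)⁻¹ ^ d * F 2 ≤ μ * 2 ^ d := by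
    refine (mul_le_mul_of_nonneg_left (hF 2) (by positivity)).trans ?_
    rw [hμ, ← mul_pow, ← mul_pow]
    push_cast
    refine pow_le_pow_left₀ (by positivity) ?_ d
    rw [inv_mul_le_iff₀ (by positivity)]
    nlinarith
  have hser : shellTerm d α 0 + ∑ j ∈ Finset.range J, shellTerm d α (j + 1)
      ≤ ∑' j, shellTerm d α j := by
    have := (summable_shellTerm hα).sum_le_tsum (Finset.range (J + 1))
      fun j _ => shellTerm_nonneg d α j
    rw [Finset.sum_range_succ'] at this
    linarith
  have hterm0 : shellTerm d α 0 = 2 * (2 ^ d - 1) := by simp [shellTerm_eq]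
  have hF1' : 0 ≤ (√2)⁻¹ ^ d * F 1 := mul_nonneg (by positivity) (hF0 1)
  have hpow : (1 : ℝ) ≤ 2 ^ d := one_le_pow₀ (by norm_num)
  have hT : 0 ≤ ∑ j ∈ Finset.range J, shellTerm d α (j + 1) :=
    Finset.sum_nonneg fun j _ => shellTerm_nonneg d α _
  set T := ∑ j ∈ Finset.range J, shellTerm d α (j + 1)
  rw [Finset.sum_range_succ', Finset.sum_range_succ']
  simp only [shellWeight, zero_add]
  have hmain : ∑ j ∈ Finset.range J, v j * (F (j + 2 + 1) - F (j + 2)) ≤ μ * T + 3 / 4 * μ := by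
    linarith
  calc _ ≤ (μ * T + 3 / 4 * μ) + (√2)⁻¹ ^ d * (F 2 - F 1) + 1 * (F 1 - F 0) := by
        gcongr
    _ ≤ μ * (T + 3 / 4 + 2 * 2 ^ d) := by linarith [hF0 0]
    _ ≤ μ * (2 * √2 * (1 + 2 * (2 ^ d - 1) + T)) := by
        refine mul_le_mul_of_nonneg_left ?_ hμ0.le
        have := mul_le_mul_of_nonneg_right hs1
          (show 0 ≤ 1 + 2 * ((2 : ℝ) ^ d - 1) + T by linarith)
        linarith
    _ ≤ μ * (2 * √2 * (1 + ∑' j, shellTerm d α j)) := by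
        refine mul_le_mul_of_nonneg_left (mul_le_mul_of_nonneg_left ?_ (by positivity)) hμ0.le
        linarith
    _ = _ := by ring

theorem jackson_type_error_estimate (d n : ℕ) (hd : 1 ≤ d) (hn : 1 ≤ n)
    (X : Set (EuclideanSpace ℝ (Fin d))) (hX : Convex ℝ X) (c C : ℝ) (hc : 0 < c)
    (hcC : c ≤ 2 * C) (Xn : Finset (EuclideanSpace ℝ (Fin d))) (hXnX : ↑Xn ⊆ X)
    (hsep : ∀ x ∈ Xn, ∀ y ∈ Xn, x ≠ y → c * (n : ℝ) ^ (-(1 : ℝ) / d) ≤ ‖x - y‖)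
    (hfill : ∀ x ∈ X, ∃ y ∈ Xn, ‖x - y‖ ≤ C * (n : ℝ) ^ (-(1 : ℝ) / d))
    (κ α : ℝ) (hκ : 0 < κ) (hα : ((d : ℝ) + 2) / 2 < α)
    (K : EuclideanSpace ℝ (Fin d) → ℝ) (hKcont : Continuous K) (hKnonneg : ∀ x, 0 ≤ K x)
    (m₁ : ℝ) (hm₁ : m₁ = sInf (K '' closedBall (0 : EuclideanSpace ℝ (Fin d)) 1))
    (hm₁pos : 0 < m₁) (hKdecay : ∀ x, K x ≤ κ * (1 + ‖x‖ ^ 2) ^ (-α))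
    (f : EuclideanSpace ℝ (Fin d) → ℝ) (hfc : ContinuousOn f X)
    (hfb : ∃ M : ℝ, ∀ x ∈ X, |f x| ≤ M) :
    ∀ x ∈ X,
      |f x - (∑ y ∈ Xn, K ((C⁻¹ * (n : ℝ) ^ ((1 : ℝ) / d)) • (x - y)))⁻¹ *
          ∑ y ∈ Xn, f y * K ((C⁻¹ * (n : ℝ) ^ ((1 : ℝ) / d)) • (x - y))| ≤
        κ * m₁⁻¹ * (C + 1) * ((2 : ℝ) ^ ((3 * (d : ℝ) + 3) / 2) * (C / c) ^ d) *
          (1 + ∑' j : ℕ, (((j : ℝ) + 2) ^ (d + 1) - ((j : ℝ) + 2) * ((j : ℝ) + 1) ^ d) *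
            ((j : ℝ) + 1) ^ (-(2 * α))) *
          omegaMod X f ((n : ℝ) ^ (-(1 : ℝ) / d)) := by
  intro x hx
  have hC : 0 < C := by linarith
  have hn0 : (0 : ℝ) < n := by exact_mod_cast hn
  set h : ℝ := (n : ℝ) ^ (-(1 : ℝ) / d) with hh
  have hh0 : 0 < h := Real.rpow_pos_of_pos hn0 _
  have hβ : C⁻¹ * (n : ℝ) ^ ((1 : ℝ) / d) = (C * h)⁻¹ := by
    rw [hh, mul_inv, ← Real.rpow_neg hn0.le, neg_div, neg_neg]
  rw [hβ]
  set β := (C * h)⁻¹ with hβdef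
  have hβ0 : 0 < β := by positivity
  have hnorm : ∀ y, ‖β • (x - y)‖ = ‖x - y‖ / (C * h) := fun y => by
    rw [norm_smul, Real.norm_of_nonneg hβ0.le, hβdef, inv_mul_eq_div]
  set ω := omegaMod X f h
  have hω : 0 ≤ ω := (abs_nonneg _).trans (abs_sub_le_omegaMod hfb hx hx (by simpa using hh0.le))
  set S := ∑ y ∈ Xn, K (β • (x - y)) with hS
  have hSm : m₁ ≤ S := by
    obtain ⟨y, hy, hxy⟩ := hfill x hx
    refine le_trans ?_ (Finset.single_le_sum (f := fun y => K (β • (x - y)))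
      (fun z _ => hKnonneg _) hy)
    rw [hm₁]
    refine csInf_le ⟨0, ?_⟩ ⟨_, ?_, rfl⟩
    · rintro _ ⟨z, -, rfl⟩; exact hKnonneg z
    · rw [mem_closedBall_zero_iff, hnorm]
      exact div_le_one_of_le₀ hxy (by positivity)
  have hS0 : 0 < S := hm₁pos.trans_le hSm
  let r : EuclideanSpace ℝ (Fin d) → ℝ := fun y => ‖β • (x - y)‖
  let F : ℕ → ℝ := fun j => ((Xn.filter fun y => ⌊r y⌋₊ < j).card : ℝ)
  have hF : ∀ j : ℕ, F j ≤ (2 * j * (C / c) + 1) ^ d := by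
    intro j
    have hcard := card_le_of_separated (Xn.filter fun y => ⌊r y⌋₊ < j) x
      (s := c * h) (R := j * (C * h)) (by positivity) (by positivity)
      (fun y hy z hz hyz => hsep y (Finset.mem_of_mem_filter y hy) z
        (Finset.mem_of_mem_filter z hz) hyz)
      (fun y hy => by
        have hlt := (Nat.floor_lt (norm_nonneg _)).1 (Finset.mem_filter.1 hy).2
        rw [hnorm, div_lt_iff₀ (by positivity)] at hlt
        exact hlt.le)
    refine hcard.trans_eq ?_
    congr 2
    field_simp
  obtain ⟨J, hJ⟩ : ∃ J, ∀ y ∈ Xn, ⌊r y⌋₊ < J + 2 :=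
    ⟨Xn.sup fun y => ⌊r y⌋₊, fun y hy => by
      have := Finset.le_sup (f := fun y => ⌊r y⌋₊) hy
      omega⟩
  have hq : 1 ≤ 2 * (C / c) := by rw [← mul_div_assoc, one_le_div hc]; exact hcC
  have hweights := sum_shellWeight_le hα hq (F := F) (fun j => Nat.cast_nonneg _) hF J
  rw [← sum_comp_eq_sum_range_mul_sub Xn (fun y => ⌊r y⌋₊) (shellWeight d α) hJ] at hweights
  have hconst : (2 : ℝ) ^ ((3 * (d : ℝ) + 3) / 2) * (C / c) ^ d
      = 2 * √2 * (2 * √2 * (C / c)) ^ d := by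
    have h2 : (2 : ℝ) ^ ((3 : ℝ) / 2) = 2 * √2 := by
      rw [show (3 : ℝ) / 2 = 1 + 1 / 2 by norm_num, Real.rpow_add (by norm_num),
        Real.rpow_one, Real.sqrt_eq_rpow]
    rw [show (3 * (d : ℝ) + 3) / 2 = 3 / 2 * ((d + 1 : ℕ) : ℝ) by push_cast; ring,
      Real.rpow_mul (by norm_num), Real.rpow_natCast, h2, mul_pow _ (C / c), pow_succ]
    ring
  rw [hconst]
  have hpoint : ∀ y ∈ Xn, |(f x - f y) * K (β • (x - y))|
      ≤ κ * (C + 1) * ω * shellWeight d α ⌊r y⌋₊ := by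
    intro y hy
    have h1 : |f x - f y| ≤ (1 + C * r y) * ω := by
      refine (abs_sub_le_mul_omegaMod hX hfb hh0 hx (hXnX hy)).trans_eq ?_
      simp only [r]
      rw [hnorm]
      congr 2
      field_simp
    rw [abs_mul, abs_of_nonneg (hKnonneg _)]
    have hr : 0 ≤ r y := norm_nonneg _
    calc |f x - f y| * K (β • (x - y))
        ≤ ((1 + C * r y) * ω) * (κ * (1 + r y ^ 2) ^ (-α)) :=
          mul_le_mul h1 (hKdecay _) (hKnonneg _) (by positivity)
      _ = κ * ω * ((1 + C * r y) * (1 + r y ^ 2) ^ (-α)) := by ring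
      _ ≤ κ * ω * ((C + 1) * shellWeight d α ⌊r y⌋₊) :=
          mul_le_mul_of_nonneg_left (kernel_le_shellWeight hα hC hr) (by positivity)
      _ = _ := by ring
  have herr : f x - S⁻¹ * ∑ y ∈ Xn, f y * K (β • (x - y))
      = S⁻¹ * ∑ y ∈ Xn, (f x - f y) * K (β • (x - y)) := by
    simp only [sub_mul, Finset.sum_sub_distrib, ← Finset.mul_sum]
    rw [← hS, mul_sub, mul_left_comm, inv_mul_cancel₀ hS0.ne', mul_one]
  rw [herr, abs_mul, abs_of_pos (inv_pos.2 hS0)]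
  calc S⁻¹ * |∑ y ∈ Xn, (f x - f y) * K (β • (x - y))|
      ≤ m₁⁻¹ * ∑ y ∈ Xn, κ * (C + 1) * ω * shellWeight d α ⌊r y⌋₊ := by
        gcongr
        exact (Finset.abs_sum_le_sum_abs _ _).trans (Finset.sum_le_sum hpoint)
    _ = m₁⁻¹ * (κ * (C + 1) * ω * ∑ y ∈ Xn, shellWeight d α ⌊r y⌋₊) := by
        rw [← Finset.mul_sum]
    _ ≤ m₁⁻¹ * (κ * (C + 1) * ω *
          (2 * √2 * (2 * √2 * (C / c)) ^ d * (1 + ∑' j, shellTerm d α j))) := by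
        gcongr
    _ = _ := by simp only [shellTerm]; ring
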